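/- arXiv:1302.2116 — 2 statements merged into one kernel-verified Lean document; each statement's English description precedes it below -/
import Mathlib

section
/- Replica trick (one-dimensional case): if 𝛍 is an exchangeable random measure on A^ℕ for a compact metric space A, then there exist a standard Borel space Ā = A^ℕ and an exchangeable sequence (Y_n, X_n)_{n∈ℕ} of (Ā × A)-valued random variables such that 𝛍(·) has the same law (as a random measure) as the conditional distribution P((X_n)_n ∈ · | (Y_n)_n). -/
open MeasureTheory ProbabilityTheory

/-- A permutation of `ℕ` is finitely supported if it fixes all but finitely many elements. -/
def FinitelySupported (σ : Equiv.Perm ℕ) : Prop := {n : ℕ | σ n ≠ n}.Finite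

/-!
By the strong law of large numbers, infinitely many replicas sampled from `𝛍` determine `𝛍` almost
surely. A further sample `X` is independent of the replicas `Y` given `𝛍`, so its conditional
distribution given `Y` is the conditional expectation of `𝛍` given `Y`, which is `𝛍` itself.
Reindexing the coordinates of `𝛍` reindexes the replicas and `X` together, and the joint law of
`(Y, X)` depends only on the law of `𝛍`; hence `(Y, X)` inherits the exchangeability of `𝛍`.
-/

open scoped ENNReal

section StrongLaw

open Filter Topology

variable {E F : Type*} [MeasurableSpace E]

theorem ae_tendsto_average_infinitePi [NormedAddCommGroup F] [NormedSpace ℝ F] [CompleteSpace F]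
    [MeasurableSpace F] [BorelSpace F] (μ : Measure E) [IsProbabilityMeasure μ] {f : E → F}
    (hf : Measurable f) (hf_int : Integrable f μ) :
    ∀ᵐ z ∂(Measure.infinitePi fun _ : ℕ => μ),
      Tendsto (fun n : ℕ => (n : ℝ)⁻¹ • ∑ i ∈ Finset.range n, f (z i)) atTop
        (𝓝 (∫ x, f x ∂μ)) := by
  have indep := iIndepFun_infinitePi (P := fun _ : ℕ => μ) (X := fun _ => f) fun _ => hf
  have law_eq (i : ℕ) :
      IdentDistrib (fun z : ℕ → E => f (z i)) f (Measure.infinitePi fun _ => μ) μ :=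
    have eval_preserving := measurePreserving_eval_infinitePi (fun _ : ℕ => μ) i
    IdentDistrib.comp (f := Function.eval i) (g := id) ⟨eval_preserving.aemeasurable,
      aemeasurable_id, eval_preserving.map_eq.trans Measure.map_id.symm⟩ hf
  rw [← (law_eq 0).integral_eq]
  exact strong_law_ae (μ := Measure.infinitePi fun _ : ℕ => μ) (fun i z => f (z i))
    ((law_eq 0).integrable_iff.2 hf_int) (fun i j hij => indep.indepFun hij)
    fun i => (law_eq i).trans (law_eq 0).symm

/-- The asymptotic frequency with which a sequence visits `S`. Taking the limit superior makes it
defined, and measurable, on all sequences. -/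
noncomputable def visitFrequency (S : Set E) (z : ℕ → E) : ℝ≥0∞ :=
  limsup (fun n : ℕ =>
    ENNReal.ofReal ((n : ℝ)⁻¹ • ∑ i ∈ Finset.range n, S.indicator (1 : E → ℝ) (z i))) atTop

theorem measurable_visitFrequency {S : Set E} (hS : MeasurableSet S) :
    Measurable (visitFrequency S) := by
  have : Measurable (S.indicator (1 : E → ℝ)) := measurable_one.indicator hS
  unfold visitFrequency
  fun_prop

theorem ae_visitFrequency_eq (μ : Measure E) [IsProbabilityMeasure μ] {S : Set E}
    (hS : MeasurableSet S) :
    ∀ᵐ z ∂(Measure.infinitePi fun _ : ℕ => μ), visitFrequency S z = μ S := by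
  filter_upwards [ae_tendsto_average_infinitePi μ (f := S.indicator (1 : E → ℝ))
    (measurable_one.indicator hS) ((integrable_const 1).indicator hS)] with z hz
  rw [integral_indicator_one hS] at hz
  exact (ENNReal.tendsto_ofReal hz).limsup_eq.trans (ofReal_measureReal)

end StrongLaw

section Kernel

variable {Ω W E : Type*} [MeasurableSpace Ω] [MeasurableSpace W] [MeasurableSpace E]

theorem kernel_ae_eq_of_forall_measurableSet [MeasurableSpace.CountableOrCountablyGenerated W E]
    {μ : Measure W} [IsFiniteMeasure μ] {κ η : Kernel W E} [IsFiniteKernel κ] [IsFiniteKernel η]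
    (h : ∀ S, MeasurableSet S → ∀ᵐ w ∂μ, κ w S = η w S) : κ =ᵐ[μ] η := by
  refine Kernel.ae_eq_of_compProd_eq (Measure.ext_prod fun {B S} hB hS => ?_)
  rw [Measure.compProd_apply_prod hB hS, Measure.compProd_apply_prod hB hS]
  exact lintegral_congr_ae (ae_restrict_of_ae (h S hS))

/-- One observation from `η ω` almost surely reveals `κ ω`. This is asked set by set, which spares
a measurable choice of a measure-valued estimator. -/
def SetwiseIdentifiable (κ : Kernel Ω E) (η : Kernel Ω W) : Prop :=
  ∀ S, MeasurableSet S → ∃ f : W → ℝ≥0∞, Measurable f ∧ ∀ ω, ∀ᵐ w ∂η ω, f w = κ ω S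

theorem SetwiseIdentifiable.map {W' : Type*} [MeasurableSpace W'] {κ : Kernel Ω E}
    {η : Kernel Ω W} (h : SetwiseIdentifiable κ η) {g : W → W'} {g' : W' → W}
    (hg : Measurable g) (hg' : Measurable g') (hinv : Function.LeftInverse g' g) :
    SetwiseIdentifiable κ (η.map g) := by
  intro S hS
  obtain ⟨f, hf, hfκ⟩ := h S hS
  refine ⟨f ∘ g', hf.comp hg', fun ω => ?_⟩
  rw [Kernel.map_apply _ hg, ae_map_iff hg.aemeasurable
    (measurableSet_eq_fun (hf.comp hg') measurable_const)]
  filter_upwards [hfκ ω] with w hw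
  rwa [Function.comp_apply, hinv w]

section Conditional

variable {P : Measure Ω} [IsFiniteMeasure P] {κ : Kernel Ω E} {η : Kernel Ω W} {C : Kernel W E}

theorem ae_disintegration_apply_eq [IsFiniteKernel η] [IsSFiniteKernel κ] [IsSFiniteKernel C]
    (hC : (η ∘ₘ P) ⊗ₘ C = (η ×ₖ κ) ∘ₘ P) {S : Set E} (hS : MeasurableSet S) {f : W → ℝ≥0∞}
    (hf : Measurable f) (hfκ : ∀ ω, ∀ᵐ w ∂η ω, f w = κ ω S) :
    ∀ᵐ w ∂(η ∘ₘ P), C w S = f w := by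
  refine ae_eq_of_forall_setLIntegral_eq_of_sigmaFinite (C.measurable_coe hS) hf
    fun B hB _ => ?_
  calc ∫⁻ w in B, C w S ∂(η ∘ₘ P)
    _ = ((η ×ₖ κ) ∘ₘ P) (B ×ˢ S) := by rw [← hC, Measure.compProd_apply_prod hB hS]
    _ = ∫⁻ ω, ∫⁻ _ in B, κ ω S ∂η ω ∂P := by
      rw [Measure.bind_apply (hB.prod hS) (Kernel.aemeasurable _)]
      simp [Kernel.prod_apply, mul_comm]
    _ = ∫⁻ ω, ∫⁻ w in B, f w ∂η ω ∂P :=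
      lintegral_congr fun ω => lintegral_congr_ae <|
        ae_restrict_of_ae <| (hfκ ω).mono fun _ hw => hw.symm
    _ = ∫⁻ w in B, f w ∂(η ∘ₘ P) := by
      simp_rw [← lintegral_indicator hB]
      rw [Measure.lintegral_bind η.aemeasurable (hf.indicator hB).aemeasurable]

theorem SetwiseIdentifiable.ae_disintegration_eq [MeasurableSpace.CountablyGenerated E]
    [IsFiniteKernel κ] [IsFiniteKernel η] [IsFiniteKernel C]
    (h : SetwiseIdentifiable κ η) (hC : (η ∘ₘ P) ⊗ₘ C = (η ×ₖ κ) ∘ₘ P) :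
    ∀ᵐ p ∂(P ⊗ₘ η), κ p.1 = C p.2 := by
  refine kernel_ae_eq_of_forall_measurableSet (κ := κ.prodMkRight W) (η := C.prodMkLeft Ω)
    fun S hS => ?_
  obtain ⟨f, hf, hfκ⟩ := h S hS
  have f_eq_κ : ∀ᵐ p ∂(P ⊗ₘ η), f p.2 = κ p.1 S :=
    Measure.ae_compProd_of_ae_ae (measurableSet_eq_fun (hf.comp measurable_snd)
      ((κ.measurable_coe hS).comp measurable_fst)) (ae_of_all _ hfκ)
  have C_eq_f : ∀ᵐ p ∂(P ⊗ₘ η), C p.2 S = f p.2 :=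
    ae_of_ae_map (f := Prod.snd) measurable_snd.aemeasurable <| by
      change ∀ᵐ w ∂(P ⊗ₘ η).snd, _
      rw [Measure.snd_compProd]
      exact ae_disintegration_apply_eq hC hS hf hfκ
  filter_upwards [f_eq_κ, C_eq_f] with p hfκ hCf
  exact hfκ.symm.trans hCf.symm

theorem SetwiseIdentifiable.map_eq_map_disintegration [MeasurableSpace.CountablyGenerated E]
    [IsFiniteKernel κ] [IsMarkovKernel η] [IsFiniteKernel C]
    (h : SetwiseIdentifiable κ η) (hC : (η ∘ₘ P) ⊗ₘ C = (η ×ₖ κ) ∘ₘ P) :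
    P.map κ = (η ∘ₘ P).map C :=
  calc P.map κ
    _ = (P ⊗ₘ η).fst.map κ := by rw [Measure.fst_compProd]
    _ = (P ⊗ₘ η).map (fun p => κ p.1) := Measure.map_map κ.measurable measurable_fst
    _ = (P ⊗ₘ η).map (fun p => C p.2) := Measure.map_congr (h.ae_disintegration_eq hC)
    _ = (P ⊗ₘ η).snd.map C := (Measure.map_map C.measurable measurable_snd).symm
    _ = (η ∘ₘ P).map C := by rw [Measure.snd_compProd]

theorem SetwiseIdentifiable.map_eq_map_condDistrib [StandardBorelSpace E] [Nonempty E]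
    [IsMarkovKernel κ] [IsMarkovKernel η] (h : SetwiseIdentifiable κ η)
    {Ω' : Type*} [MeasurableSpace Ω'] {P' : Measure Ω'} [IsFiniteMeasure P']
    {Y : Ω' → W} {X : Ω' → E} (hY : Measurable Y) (hX : Measurable X)
    (hYX : P'.map (fun ω => (Y ω, X ω)) = (η ×ₖ κ) ∘ₘ P) :
    P.map κ = P'.map (fun ω => condDistrib X Y P' (Y ω)) := by
  have law_Y : P'.map Y = η ∘ₘ P := by
    rw [← Measure.fst_map_prodMk hX, hYX, Measure.fst, Measure.map_comp _ _ measurable_fst,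
      ← Kernel.fst_eq, Kernel.fst_prod]
  have disintegration : (η ∘ₘ P) ⊗ₘ condDistrib X Y P' = (η ×ₖ κ) ∘ₘ P := by
    rw [← law_Y, compProd_map_condDistrib hX.aemeasurable, hYX]
  rw [h.map_eq_map_disintegration disintegration, ← law_Y,
    Measure.map_map (Kernel.measurable _) hY]
  rfl

end Conditional

end Kernel

section Replicas

variable {Ω Ω' E A ι : Type*} [MeasurableSpace Ω] [MeasurableSpace Ω'] [MeasurableSpace E]
  [MeasurableSpace A]

/-- The kernel sending `ω` to the law of a family of independent samples of `κ ω`. -/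
noncomputable def iidKernel (ι : Type*) (κ : Kernel Ω E) [IsMarkovKernel κ] :
    Kernel Ω (ι → E) where
  toFun ω := Measure.infinitePi fun _ => κ ω
  measurable' := by
    refine Measurable.measure_of_isPiSystem_of_isProbabilityMeasure
      (generateFrom_squareCylinders (α := fun _ : ι => E)).symm
      (isPiSystem_squareCylinders (fun _ => MeasurableSpace.isPiSystem_measurableSet)
        fun _ => MeasurableSet.univ) ?_
    rintro _ ⟨s, t, ht, rfl⟩
    have ht' (i : ι) : MeasurableSet (t i) := ht i (Set.mem_univ i)
    simp_rw [Measure.infinitePi_pi _ fun i _ => ht' i]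
    exact Finset.measurable_prod _ fun i _ => κ.measurable_coe (ht' i)

theorem iidKernel_apply (ι : Type*) (κ : Kernel Ω E) [IsMarkovKernel κ] (ω : Ω) :
    iidKernel ι κ ω = Measure.infinitePi fun _ => κ ω := rfl

instance (ι : Type*) (κ : Kernel Ω E) [IsMarkovKernel κ] : IsMarkovKernel (iidKernel ι κ) :=
  ⟨fun ω => by rw [iidKernel_apply]; infer_instance⟩

theorem setwiseIdentifiable_iidKernel (κ : Kernel Ω E) [IsMarkovKernel κ] :
    SetwiseIdentifiable κ (iidKernel ℕ κ) := fun S hS =>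
  ⟨visitFrequency S, measurable_visitFrequency hS, fun ω => ae_visitFrequency_eq (κ ω) hS⟩

theorem measurable_swap_pi {ι' : Type*} :
    Measurable (Function.swap : (ι' → ι → A) → ι → ι' → A) := by
  unfold Function.swap
  fun_prop

/-- The law of the array `Y n j = X j n`, where the `X j` are independent samples of `κ ω`. -/
noncomputable def replicaKernel (κ : Kernel Ω (ι → A)) [IsMarkovKernel κ] :
    Kernel Ω (ι → ℕ → A) :=
  (iidKernel ℕ κ).map Function.swap

instance (κ : Kernel Ω (ι → A)) [IsMarkovKernel κ] : IsMarkovKernel (replicaKernel κ) :=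
  Kernel.IsMarkovKernel.map _ measurable_swap_pi

theorem setwiseIdentifiable_replicaKernel (κ : Kernel Ω (ι → A)) [IsMarkovKernel κ] :
    SetwiseIdentifiable κ (replicaKernel κ) :=
  (setwiseIdentifiable_iidKernel κ).map measurable_swap_pi measurable_swap_pi fun _ => rfl

/-- The joint law of the replicas and a further sample `X`, given `ω`. -/
noncomputable def replicaPairKernel (κ : Kernel Ω (ι → A)) [IsMarkovKernel κ] :
    Kernel Ω ((ι → ℕ → A) × (ι → A)) :=
  replicaKernel κ ×ₖ κ

instance (κ : Kernel Ω (ι → A)) [IsMarkovKernel κ] : IsMarkovKernel (replicaPairKernel κ) := by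
  unfold replicaPairKernel; infer_instance

theorem replicaPairKernel_apply (κ : Kernel Ω (ι → A)) [IsMarkovKernel κ] (ω : Ω) :
    replicaPairKernel κ ω =
      ((Measure.infinitePi fun _ : ℕ => κ ω).map Function.swap).prod (κ ω) := by
  rw [replicaPairKernel, Kernel.prod_apply, replicaKernel, Kernel.map_apply _ measurable_swap_pi,
    iidKernel_apply]

theorem measurable_reindex {ι' : Type*} (σ : ι' → ι) :
    Measurable fun (x : ι → A) n => x (σ n) := by
  fun_prop

instance {ι' : Type*} (κ : Kernel Ω (ι → A)) [IsMarkovKernel κ] (σ : ι' → ι) :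
    IsMarkovKernel (κ.map fun x n => x (σ n)) :=
  Kernel.IsMarkovKernel.map κ (measurable_reindex σ)

theorem replicaPairKernel_map_reindex {ι' : Type*} (κ : Kernel Ω (ι → A)) [IsMarkovKernel κ]
    (σ : ι' → ι) :
    replicaPairKernel (κ.map fun x n => x (σ n)) =
      (replicaPairKernel κ).map (Prod.map (fun y n => y (σ n)) fun x n => x (σ n)) := by
  ext1 ω
  have replicas_map : (Measure.infinitePi fun _ : ℕ => (κ ω).map fun x n => x (σ n)) =
      (Measure.infinitePi fun _ : ℕ => κ ω).map fun z j n => z j (σ n) :=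
    (Measure.infinitePi_map_pi (fun _ => κ ω) fun _ => measurable_reindex σ).symm
  rw [Kernel.map_apply _ (by fun_prop), replicaPairKernel_apply, replicaPairKernel_apply,
    ← Measure.map_prod_map _ _ (measurable_reindex σ) (measurable_reindex σ),
    Measure.map_map (measurable_reindex σ) measurable_swap_pi]
  simp_rw [Kernel.map_apply _ (measurable_reindex σ)]
  rw [replicas_map, Measure.map_map measurable_swap_pi (by fun_prop)]
  rfl

theorem replicaPairKernel_comap (κ : Kernel Ω (ι → A)) [IsMarkovKernel κ] {g : Ω' → Ω}
    (hg : Measurable g) :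
    replicaPairKernel (κ.comap g hg) = (replicaPairKernel κ).comap g hg := by
  ext1 ω
  simp_rw [Kernel.comap_apply, replicaPairKernel_apply, Kernel.comap_apply]

theorem replicaPairKernel_comap_comp (κ : Kernel Ω (ι → A)) [IsMarkovKernel κ] {g : Ω' → Ω}
    (hg : Measurable g) (P : Measure Ω') :
    replicaPairKernel (κ.comap g hg) ∘ₘ P = replicaPairKernel κ ∘ₘ P.map g := by
  rw [replicaPairKernel_comap, ← Kernel.comp_deterministic_eq_comap, ← Measure.comp_assoc,
    Measure.deterministic_comp_eq_map]

/-- The tautological kernel on the space of probability measures. Every Markov kernel is a comap of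
it, so a construction commuting with comaps depends on a random measure only through its law. -/
noncomputable def probabilityMeasureKernel (E : Type*) [MeasurableSpace E] :
    Kernel (ProbabilityMeasure E) E :=
  ⟨Subtype.val, measurable_subtype_coe⟩

instance : IsMarkovKernel (probabilityMeasureKernel E) := ⟨fun μ => μ.2⟩

theorem replicaPairKernel_comp_congr {κ : Kernel Ω (ι → A)} {κ' : Kernel Ω' (ι → A)}
    [IsMarkovKernel κ] [IsMarkovKernel κ'] {P : Measure Ω} {P' : Measure Ω'}
    (h : P.map κ = P'.map κ') : replicaPairKernel κ ∘ₘ P = replicaPairKernel κ' ∘ₘ P' := by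
  let τ := probabilityMeasureKernel (ι → A)
  let g (ω : Ω) : ProbabilityMeasure (ι → A) := ⟨κ ω, inferInstance⟩
  let g' (ω : Ω') : ProbabilityMeasure (ι → A) := ⟨κ' ω, inferInstance⟩
  have hg : Measurable g := κ.measurable.subtype_mk
  have hg' : Measurable g' := κ'.measurable.subtype_mk
  have coe_embedding : MeasurableEmbedding τ :=
    MeasurableEmbedding.subtype_coe ProbabilityMeasure.measurableSet_isProbabilityMeasure
  have map_eq : P.map g = P'.map g' := coe_embedding.map_injective <| by
    rwa [Measure.map_map τ.measurable hg, Measure.map_map τ.measurable hg']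
  calc replicaPairKernel (τ.comap g hg) ∘ₘ P
    _ = replicaPairKernel τ ∘ₘ P.map g := replicaPairKernel_comap_comp τ hg P
    _ = replicaPairKernel τ ∘ₘ P'.map g' := by rw [map_eq]
    _ = replicaPairKernel (τ.comap g' hg') ∘ₘ P' := (replicaPairKernel_comap_comp τ hg' P').symm

theorem map_reindex_replicaPairKernel_comp {κ : Kernel Ω (ι → A)} [IsMarkovKernel κ]
    {P : Measure Ω} {σ : ι → ι} (h : P.map (fun ω => (κ ω).map fun x n => x (σ n)) = P.map κ) :
    (replicaPairKernel κ ∘ₘ P).map (Prod.map (fun y n => y (σ n)) fun x n => x (σ n)) =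
      replicaPairKernel κ ∘ₘ P := by
  rw [Measure.map_comp _ _ (by fun_prop), ← replicaPairKernel_map_reindex]
  refine replicaPairKernel_comp_congr (Eq.trans ?_ h)
  exact congrArg P.map (funext fun ω => Kernel.map_apply _ (measurable_reindex σ) ω)

end Replicas

theorem replica_trick_general {Ω A ι : Type*} [MeasurableSpace Ω] [MeasurableSpace A]
    [StandardBorelSpace A] [Nonempty A] [Countable ι] (P : Measure Ω) [IsProbabilityMeasure P]
    (κ : Kernel Ω (ι → A)) [IsMarkovKernel κ] :
    ∃ (Ω' : Type) (_ : MeasurableSpace Ω') (P' : Measure Ω') (_ : IsProbabilityMeasure P')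
      (Y : Ω' → ι → (ℕ → A)) (X : Ω' → ι → A),
      Measurable Y ∧ Measurable X ∧
      (∀ σ : ι → ι, P.map (fun ω => (κ ω).map fun x n => x (σ n)) = P.map κ →
        P'.map (fun ω n => (Y ω (σ n), X ω (σ n))) = P'.map (fun ω n => (Y ω n, X ω n))) ∧
      P.map κ = P'.map (fun ω => condDistrib X Y P' (Y ω)) := by
  obtain ⟨Z, hZ, law_Z⟩ := (replicaPairKernel κ ∘ₘ P).exists_measurable_map_eq
  -- Realizing the joint law on the unit interval keeps the sample space in `Type`.
  refine ⟨unitInterval, inferInstance, volume, inferInstance, fun ω => (Z ω).1, fun ω => (Z ω).2,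
    hZ.fst, hZ.snd, fun σ hσ => ?_,
    (setwiseIdentifiable_replicaKernel κ).map_eq_map_condDistrib hZ.fst hZ.snd law_Z⟩
  let reindex : (ι → ℕ → A) × (ι → A) → (ι → ℕ → A) × (ι → A) :=
    Prod.map (fun y n => y (σ n)) fun x n => x (σ n)
  have reindex_meas : Measurable reindex := (measurable_reindex σ).prodMap (measurable_reindex σ)
  have zip_meas : Measurable fun (p : (ι → ℕ → A) × (ι → A)) n => (p.1 n, p.2 n) := by fun_prop
  have law_reindex_Z : volume.map (reindex ∘ Z) = volume.map Z := by
    rw [← Measure.map_map reindex_meas hZ, law_Z, map_reindex_replicaPairKernel_comp hσ]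
  have law_zip := congrArg (Measure.map fun p n => (p.1 n, p.2 n)) law_reindex_Z
  rwa [Measure.map_map zip_meas (reindex_meas.comp hZ), Measure.map_map zip_meas hZ] at law_zip

/-- Replica trick in one dimension: if `𝛍` is an exchangeable random measure on `A^ℕ` for a
compact metric space `A`, then there are a probability space and an exchangeable sequence
`(Y_n, X_n)_n` of `(A^ℕ × A)`-valued random variables such that `𝛍` has the same law, as a
random measure, as the conditional distribution of `(X_n)_n` given `(Y_n)_n`. -/
theorem replica_trick {Ω A : Type*} [MeasurableSpace Ω]
    [MetricSpace A] [CompactSpace A] [MeasurableSpace A] [BorelSpace A] [Nonempty A]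
    (P : Measure Ω) [IsProbabilityMeasure P]
    (M : Ω → Measure (ℕ → A)) (hM_meas : Measurable M)
    (hM_prob : ∀ ω, IsProbabilityMeasure (M ω))
    (hERM : ∀ σ, FinitelySupported σ →
      P.map (fun ω => (M ω).map (fun x n => x (σ n))) = P.map M) :
    ∃ (Ω' : Type) (_ : MeasurableSpace Ω') (P' : Measure Ω')
      (_ : IsProbabilityMeasure P')
      (Y : Ω' → ℕ → (ℕ → A)) (X : Ω' → ℕ → A),
      Measurable Y ∧ Measurable X ∧
      (∀ σ, FinitelySupported σ →
        P'.map (fun ω => fun n => (Y ω (σ n), X ω (σ n)))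
          = P'.map (fun ω => fun n => (Y ω n, X ω n))) ∧
      P.map M = P'.map (fun ω => (condDistrib X Y P') (Y ω)) := by
  have : IsMarkovKernel (⟨M, hM_meas⟩ : Kernel Ω (ℕ → A)) := ⟨hM_prob⟩
  obtain ⟨Ω', _, P', hP', Y, X, hY, hX, hYX, hM⟩ := replica_trick_general P ⟨M, hM_meas⟩
  exact ⟨Ω', _, P', hP', Y, X, hY, hX, fun σ hσ => hYX σ (hERM σ hσ), hM⟩
end

section
/- Corollary (factorization of skew-product maps): let U = (U_e)_{e⊆[k]} and V = (V_e)_{e⊆[k]} be independent uniform random variables in [0,1)^{P[k]}. If G : [0,1)^{P[k]} → [0,1)^{P[k]} is a function of skew-product type whose skew-product tuple is Lebesgue-measure-preserving, then there is a function H : ([0,1)×[0,1))^{P[k]} → [0,1)^{P[k]} of skew-product type, with Lebesgue-measure-preserving skew-product tuple, such that G(H(U,V)) = U almost surely. -/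
open MeasureTheory

/-- The uniform probability measure on `[0,1) ⊆ ℝ`. -/
noncomputable def unif01 : Measure ℝ := volume.restrict (Set.Ico (0:ℝ) 1)

/-- The function of skew-product type `f̂` associated to a skew-product tuple
`f_i : C^{P[i]} → D`: the coordinate of `f̂(x)` at `e ⊆ [k]` is `f_{|e|}` applied to the
coordinates of `x` indexed by subsets of `e`, reindexed along `Fin e.card ≃o e`. -/
def hatC {C D : Type*} {k : ℕ} (f : ∀ i : ℕ, (Finset (Fin i) → C) → D)
    (x : Finset (Fin k) → C) (e : Finset (Fin k)) : D :=
  f e.card (fun a => x (a.map (e.orderEmbOfFin rfl).toEmbedding))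

/-- A skew-product tuple is middle-symmetric if each `f_i` is invariant under the simultaneous
action of any permutation of `[i]` on the coordinate indices. -/
def MidSymC {C D : Type*} (f : ∀ i : ℕ, (Finset (Fin i) → C) → D) : Prop :=
  ∀ (i : ℕ) (σ : Equiv.Perm (Fin i)) (x : Finset (Fin i) → C),
    f i (fun a => x (a.map σ.toEmbedding)) = f i x

/-- A skew-product tuple is measure-preserving (from `μC` to `μD`) if for each `i` and each
fixed assignment on the proper subsets of `[i]`, the map of the top coordinate `u ↦ f_i(x, u)`
pushes `μC` forward to `μD`. -/
def IsMPTuple {C D : Type*} [MeasurableSpace C] [MeasurableSpace D]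
    (μC : Measure C) (μD : Measure D) (f : ∀ i : ℕ, (Finset (Fin i) → C) → D) : Prop :=
  ∀ (i : ℕ) (x : Finset (Fin i) → C),
    μC.map (fun u => f i (Function.update x Finset.univ u)) = μD

/-!
Resample from the conditional law: given a law `π` of a pair in `D × C`, a second coordinate can be
drawn from a first coordinate and an independent uniform variable, jointly measurably in `π` as
well.  Apply this to the law of `(g_i(y, w), w)` for `w` uniform, where `y` collects the coordinates
at the proper subsets of `[i]`.  The resampled `w` is uniform and almost surely satisfies
`g_i(y, w) = u`, where `u` is the prescribed first coordinate, so `h_i` can be defined by recursion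
on `i`.  The resampling sees `y` only through that law, which is invariant under permutations of
`[i]`; this is what makes `h` middle-symmetric.
-/

open ProbabilityTheory Function

variable {B C D R ι : Type*}

section FaceRestriction

/-- The coordinates of `x` at the subsets of `e`, reindexed by the subsets of `Fin e.card` along the
increasing enumeration of `e`. -/
def restrictFace {k : ℕ} (x : Finset (Fin k) → C) (e : Finset (Fin k)) :
    Finset (Fin e.card) → C :=
  fun a => x (a.map (e.orderEmbOfFin rfl).toEmbedding)

lemma update_univ_map_comp_map {κ : Type*} [Fintype ι] [DecidableEq ι] [DecidableEq κ]
    (φ : ι ↪ κ) (x : Finset κ → C) (u : C) :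
    (fun a : Finset ι => update x (Finset.univ.map φ) u (a.map φ)) =
      update (fun a => x (a.map φ)) Finset.univ u :=
  update_comp_eq_of_injective x (Finset.map_injective φ) Finset.univ u

lemma restrictFace_update {k : ℕ} (x : Finset (Fin k) → C) (e : Finset (Fin k)) (u : C) :
    restrictFace (update x e u) e = update (restrictFace x e) Finset.univ u := by
  have := update_univ_map_comp_map (e.orderEmbOfFin rfl).toEmbedding x u
  rwa [Finset.map_orderEmbOfFin_univ] at this

lemma exists_perm_trans_eq_orderEmbOfFin {α : Type*} [LinearOrder α] {n : ℕ} (φ : Fin n ↪ α)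
    (h : (Finset.univ.map φ).card = n) :
    ∃ σ : Equiv.Perm (Fin n),
      σ.toEmbedding.trans φ = ((Finset.univ.map φ).orderEmbOfFin h).toEmbedding := by
  have hmono : StrictMono (φ ∘ Tuple.sort φ) :=
    (Tuple.monotone_sort φ).strictMono_of_injective (φ.injective.comp (Equiv.injective _))
  refine ⟨Tuple.sort φ, DFunLike.coe_injective ?_⟩
  exact Finset.orderEmbOfFin_unique h (fun j => by simp) hmono

end FaceRestriction

section HatC

/-- Invariance of one member of a skew-product tuple under the simultaneous action of any
permutation on the coordinate indices: `MidSymC f` says that every `f i` has this property. -/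
def IsPermInvariant (F : (Finset ι → C) → D) : Prop :=
  ∀ (σ : Equiv.Perm ι) (x : Finset ι → C), F (fun a => x (a.map σ.toEmbedding)) = F x

variable {f : ∀ i : ℕ, (Finset (Fin i) → C) → D} {k n : ℕ}

lemma measurable_hatC [MeasurableSpace C] [MeasurableSpace D] {e : Finset (Fin k)}
    (hf : Measurable (f e.card)) : Measurable fun x : Finset (Fin k) → C => hatC f x e :=
  hf.comp (measurable_pi_lambda _ fun _ => measurable_pi_apply _)

lemma hatC_update_of_not_subset {e e' : Finset (Fin k)} (h : ¬e ⊆ e') (x : Finset (Fin k) → C)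
    (u : C) : hatC f (update x e u) e' = hatC f x e' := by
  refine congrArg (f e'.card) (funext fun a => update_of_ne ?_ u x)
  rintro rfl
  refine h fun j hj => ?_
  obtain ⟨l, -, rfl⟩ := Finset.mem_map.1 hj
  exact Finset.orderEmbOfFin_mem e' rfl l

lemma hatC_eq_of_card_eq (x : Finset (Fin k) → C) {e : Finset (Fin k)} (h : e.card = n) :
    hatC f x e = f n (fun a => x (a.map (e.orderEmbOfFin h).toEmbedding)) := by
  subst h
  rfl

lemma hatC_map_univ (hf : IsPermInvariant (f n)) (x : Finset (Fin k) → C) (φ : Fin n ↪ Fin k) :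
    hatC f x (Finset.univ.map φ) = f n (fun a => x (a.map φ)) := by
  have h : (Finset.univ.map φ).card = n := by simp
  obtain ⟨σ, hσ⟩ := exists_perm_trans_eq_orderEmbOfFin φ h
  simp only [hatC_eq_of_card_eq x h, ← hσ, ← Finset.map_map]
  exact hf σ fun a => x (a.map φ)

lemma hatC_univ (hf : IsPermInvariant (f n)) (x : Finset (Fin n) → C) :
    hatC f x Finset.univ = f n x := by
  simpa using hatC_map_univ hf x (Embedding.refl _)

lemma hatC_map {a : Finset (Fin n)} (hf : IsPermInvariant (f a.card)) (x : Finset (Fin k) → C)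
    (φ : Fin n ↪ Fin k) : hatC f x (a.map φ) = hatC f (fun b => x (b.map φ)) a := by
  have := hatC_map_univ hf x ((a.orderEmbOfFin rfl).toEmbedding.trans φ)
  simp only [← Finset.map_map, Finset.map_orderEmbOfFin_univ] at this
  exact this

lemma hatC_hatC_apply {E : Type*} (g : ∀ i : ℕ, (Finset (Fin i) → D) → E) (hf : MidSymC f)
    (x : Finset (Fin k) → C) (e : Finset (Fin k)) :
    hatC g (hatC f x) e = g e.card (hatC f (restrictFace x e)) :=
  congrArg (g e.card) (funext fun _ => hatC_map (hf _) x _)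

end HatC

lemma ae_pi_of_forall_ae_update {X : ι → Type*} [Fintype ι] [DecidableEq ι]
    [∀ i, MeasurableSpace (X i)] {μ : ∀ i, Measure (X i)} [∀ i, SigmaFinite (μ i)] (i : ι)
    {p : (∀ i, X i) → Prop} (hp : MeasurableSet {x | p x})
    (h : ∀ x, ∀ᵐ u ∂μ i, p (update x i u)) : ∀ᵐ x ∂Measure.pi μ, p x := by
  have hind : Measurable ({x | p x}ᶜ.indicator (1 : (∀ i, X i) → ENNReal)) :=
    measurable_one.indicator hp.compl
  have hzero : ∫⁻ x, {x | p x}ᶜ.indicator 1 x ∂Measure.pi μ = ∫⁻ _, 0 ∂Measure.pi μ := by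
    refine lintegral_eq_of_lmarginal_eq {i} hind measurable_const ?_
    simp only [lmarginal_singleton]
    funext x
    refine lintegral_congr_ae ((h x).mono fun u hu => ?_)
    simp [hu]
  rw [lintegral_zero, lintegral_indicator_one hp.compl] at hzero
  exact hzero

section Recursion

variable [Nonempty C]

/-- The skew-product tuple defined from the recursion rules `Q i` by
`h_i(z) = Q_i((ĥ(z)_a)_{a ⊊ [i]}, z_{[i]})`.  The rule `Q i` also receives an entry at `[i]` itself,
which carries no information: it is filled with an arbitrary constant. -/
noncomputable def recTuple (Q : ∀ i : ℕ, (Finset (Fin i) → C) → B → C) :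
    ∀ i : ℕ, (Finset (Fin i) → B) → C
  | i, z => Q i (fun a => if _ : a.card < i then recTuple Q a.card (restrictFace z a)
      else Classical.ofNonempty) (z Finset.univ)
termination_by i => i

/-- The values of the map of skew-product type `hatC (recTuple Q)` at the proper subsets of `[i]`,
completed at `[i]` by the arbitrary constant used in `recTuple`. -/
noncomputable def properCoords (Q : ∀ i : ℕ, (Finset (Fin i) → C) → B → C) {i : ℕ}
    (z : Finset (Fin i) → B) (a : Finset (Fin i)) : C :=
  if a.card < i then hatC (recTuple Q) z a else Classical.ofNonempty

variable {Q : ∀ i : ℕ, (Finset (Fin i) → C) → B → C}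

lemma recTuple_eq {i : ℕ} (z : Finset (Fin i) → B) :
    recTuple Q i z = Q i (properCoords Q z) (z Finset.univ) := by
  rw [recTuple]
  rfl

lemma properCoords_update_univ {i : ℕ} (z : Finset (Fin i) → B) (p : B) :
    properCoords Q (update z Finset.univ p) = properCoords Q z := by
  funext a
  refine ite_congr rfl (fun ha => hatC_update_of_not_subset (fun h => ?_) z p) fun _ => rfl
  simp [Finset.univ_subset_iff.1 h] at ha

lemma measurable_recTuple [MeasurableSpace B] [MeasurableSpace C]
    (hQ : ∀ i, Measurable (uncurry (Q i))) (i : ℕ) : Measurable (recTuple Q i) := by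
  induction i using Nat.strong_induction_on with
  | _ i ih =>
    have hcoords : Measurable (properCoords Q (i := i)) := by
      refine measurable_pi_lambda _ fun a => ?_
      by_cases ha : a.card < i
      · simpa only [properCoords, ha, if_true] using measurable_hatC (ih _ ha)
      · simp only [properCoords, ha, if_false, measurable_const]
    simpa only [comp_def, uncurry, ← recTuple_eq] using
      (hQ i).comp (hcoords.prodMk (measurable_pi_apply Finset.univ))

lemma midSymC_recTuple (hQ : ∀ i, IsPermInvariant (Q i)) : MidSymC (recTuple Q) := by
  intro i
  induction i using Nat.strong_induction_on with
  | _ i ih =>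
    intro σ z
    have hcoords : properCoords Q (fun a => z (a.map σ.toEmbedding)) =
        fun a => properCoords Q z (a.map σ.toEmbedding) := by
      funext a
      simp only [properCoords, Finset.card_map]
      exact ite_congr rfl (fun ha => (hatC_map (ih _ ha) z _).symm) fun _ => rfl
    rw [recTuple_eq, recTuple_eq, hcoords, hQ, Finset.map_univ_equiv]

lemma isMPTuple_recTuple [MeasurableSpace B] [MeasurableSpace C] {π : Measure B} {μ : Measure C}
    (hQ : ∀ i y, π.map (Q i y) = μ) : IsMPTuple π μ (recTuple Q) := by
  intro i z
  simpa only [recTuple_eq, properCoords_update_univ, update_self] using hQ i (properCoords Q z)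

lemma hatC_recTuple (hQ : ∀ i, IsPermInvariant (Q i)) {i : ℕ} (z : Finset (Fin i) → B) :
    hatC (recTuple Q) z =
      update (properCoords Q z) Finset.univ (Q i (properCoords Q z) (z Finset.univ)) := by
  refine eq_update_iff.2 ⟨?_, fun a ha => ?_⟩
  · rw [hatC_univ (midSymC_recTuple hQ i), recTuple_eq]
  · have hcard : a.card < i := by simpa using (Finset.card_lt_iff_ne_univ a).2 ha
    simp only [properCoords, hcard, if_true]

lemma ae_hatC_hatC_recTuple_eq [MeasurableSpace B] [MeasurableSpace C] [MeasurableSpace D]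
    [MeasurableEq D] {π : Measure B} [SigmaFinite π] {g : ∀ i : ℕ, (Finset (Fin i) → C) → D}
    {s : B → D} (hg : ∀ i, Measurable (g i)) (hs : Measurable s)
    (hQm : ∀ i, Measurable (uncurry (Q i))) (hQs : ∀ i, IsPermInvariant (Q i))
    (hQ : ∀ i y, ∀ᵐ p ∂π, g i (update y Finset.univ (Q i y p)) = s p) (k : ℕ) :
    ∀ᵐ x ∂Measure.pi fun _ : Finset (Fin k) => π,
      hatC g (hatC (recTuple Q) x) = fun e => s (x e) := by
  simp only [funext_iff]
  refine ae_all_iff.2 fun e => ae_pi_of_forall_ae_update e ?_ fun x => ?_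
  · have hhat : Measurable fun x : Finset (Fin k) → B => hatC (recTuple Q) x :=
      measurable_pi_lambda _ fun e => measurable_hatC (measurable_recTuple hQm e.card)
    exact measurableSet_eq_fun ((measurable_hatC (hg e.card)).comp hhat)
      (hs.comp (measurable_pi_apply e))
  · filter_upwards [hQ e.card (properCoords Q (restrictFace x e))] with p hp
    rw [hatC_hatC_apply g (midSymC_recTuple hQs), restrictFace_update, hatC_recTuple hQs,
      properCoords_update_univ, update_self, update_self, hp]

end Recursion

section Resampling

variable [MeasurableSpace C] [MeasurableSpace D] [MeasurableSpace R]

lemma isProbabilityMeasure_of_measurePreserving {ρ : Measure R} {η : Measure D}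
    [IsProbabilityMeasure η] {τ : R → D} (hτ : MeasurePreserving τ ρ η) :
    IsProbabilityMeasure ρ := by
  have : IsProbabilityMeasure (ρ.map τ) := hτ.map_eq ▸ inferInstance
  exact Measure.isProbabilityMeasure_of_map τ

lemma map_prodMk_prod_eq_compProd {ν : Measure D} [SFinite ν] {ρ : Measure R} [SFinite ρ]
    {κ : Kernel D C} [IsSFiniteKernel κ] {s : D → R → C} (hs : Measurable (uncurry s))
    (h : ∀ d, ρ.map (s d) = κ d) :
    (ν.prod ρ).map (fun p => (p.1, s p.1 p.2)) = ν.compProd κ := by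
  have hpair : Measurable fun p : D × R => (p.1, s p.1 p.2) := measurable_fst.prodMk hs
  ext t ht
  rw [Measure.map_apply hpair ht, Measure.prod_apply (hpair ht), Measure.compProd_apply ht]
  refine lintegral_congr fun d => ?_
  rw [← h, Measure.map_apply hs.of_uncurry_left (measurable_prodMk_left ht)]
  rfl

lemma exists_measurable_map_prodMk_eq [StandardBorelSpace C] [Nonempty C] {X : Type*}
    [MeasurableSpace X] [MeasurableSpace.CountableOrCountablyGenerated X D] (κ : Kernel X (D × C))
    [IsMarkovKernel κ] {ρ : Measure R} {τ : R → unitInterval} (hτ : MeasurePreserving τ ρ volume) :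
    ∃ φ : X → D × R → C, Measurable (uncurry φ) ∧
      ∀ a, ((κ.fst a).prod ρ).map (fun p => (p.1, φ a p)) = κ a := by
  have : IsProbabilityMeasure ρ := isProbabilityMeasure_of_measurePreserving hτ
  obtain ⟨q, hq, hqκ⟩ := Kernel.exists_measurable_map_eq_unitInterval κ.condKernel
  have hτ_meas := hτ.measurable
  have hqτ : Measurable fun z : X × D × R => q (z.1, z.2.1) (τ z.2.2) :=
    hq.comp (g := uncurry q) (f := fun z : X × D × R => ((z.1, z.2.1), τ z.2.2)) (by fun_prop)
  refine ⟨fun a p => q (a, p.1) (τ p.2), hqτ, fun a => ?_⟩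
  have hlaw (d : D) : ρ.map (fun r => q (a, d) (τ r)) = κ.condKernel.sectR a d := by
    rw [Kernel.sectR_apply, ← hqκ, ← hτ.map_eq, Measure.map_map hq.of_uncurry_left hτ_meas]
    rfl
  calc ((κ.fst a).prod ρ).map (fun p => (p.1, q (a, p.1) (τ p.2)))
      = (κ.fst a).compProd (κ.condKernel.sectR a) :=
        map_prodMk_prod_eq_compProd (s := fun d r => q (a, d) (τ r))
          (hqτ.comp measurable_prodMk_left) hlaw
    _ = (κ.fst.compProd κ.condKernel) a := (Kernel.compProd_apply_eq_compProd_sectR _ _ _).symm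
    _ = κ a := by rw [Kernel.disintegrate]

variable {μ : Measure C} {ν : Measure D}

lemma map_eq_of_map_prodMk_eq_graph {π : Measure (D × R)} {f : C → D} {s : D × R → C}
    (hf : Measurable f) (hs : Measurable s)
    (h : π.map (fun p => (p.1, s p)) = μ.map (fun c => (f c, c))) : π.map s = μ := by
  have := congrArg (Measure.map Prod.snd) h
  rwa [Measure.map_map (by fun_prop) (by fun_prop), Measure.map_map (by fun_prop) (by fun_prop),
    show Prod.snd ∘ (fun c => (f c, c)) = id from rfl, Measure.map_id] at this

lemma ae_eq_fst_of_map_prodMk_eq_graph [MeasurableEq D] {π : Measure (D × R)} {f : C → D}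
    {s : D × R → C} (hf : Measurable f) (hs : Measurable s)
    (h : π.map (fun p => (p.1, s p)) = μ.map (fun c => (f c, c))) :
    ∀ᵐ p ∂π, f (s p) = p.1 := by
  have hgraph : MeasurableSet {p : D × C | f p.2 = p.1} :=
    measurableSet_eq_fun (hf.comp measurable_snd) measurable_fst
  have : ∀ᵐ p ∂μ.map (fun c => (f c, c)), f p.2 = p.1 :=
    (ae_map_iff (by fun_prop) hgraph).2 (.of_forall fun _ => rfl)
  rw [← h] at this
  exact (ae_map_iff (by fun_prop) hgraph).1 this

variable [Fintype ι] [DecidableEq ι] {G : (Finset ι → C) → D}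

/-- The law of `(G(y, w), w)` for `w` of law `μ`, where `G(y, w)` is `G` evaluated at the
coordinates of `y` at the proper subsets of `ι` and at the top coordinate `w`. -/
noncomputable def topGraphLaw (μ : Measure C) (G : (Finset ι → C) → D) (y : Finset ι → C) :
    Measure (D × C) :=
  μ.map fun w => (G (update y Finset.univ w), w)

lemma isProbabilityMeasure_topGraphLaw [IsProbabilityMeasure μ] (hG : Measurable G)
    (y : Finset ι → C) : IsProbabilityMeasure (topGraphLaw μ G y) :=
  Measure.isProbabilityMeasure_map
    ((hG.comp (measurable_update y)).prodMk measurable_id).aemeasurable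

lemma fst_topGraphLaw (y : Finset ι → C) :
    (topGraphLaw μ G y).fst = μ.map fun w => G (update y Finset.univ w) :=
  Measure.fst_map_prodMk measurable_id

lemma measurable_topGraphLaw [SFinite μ] (hG : Measurable G) : Measurable (topGraphLaw μ G) := by
  have hpair : Measurable fun z : (Finset ι → C) × C => (G (update z.1 Finset.univ z.2), z.2) :=
    (hG.comp measurable_update').prodMk measurable_snd
  have hcomp : topGraphLaw μ G = fun y =>
      (μ.map (Prod.mk y)).map fun z => (G (update z.1 Finset.univ z.2), z.2) :=
    funext fun _ => (Measure.map_map hpair measurable_prodMk_left).symm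
  rw [hcomp]
  exact (Measure.measurable_map _ hpair).comp Measurable.map_prodMk_left

lemma isPermInvariant_topGraphLaw (hG : IsPermInvariant G) :
    IsPermInvariant (topGraphLaw μ G) := by
  intro σ y
  refine congrArg μ.map (funext fun w => ?_)
  rw [← update_univ_map_comp_map, hG, Finset.map_univ_equiv]

lemma exists_measurable_resampling [StandardBorelSpace C] [MeasurableSpace.CountablyGenerated D]
    [MeasurableEq D] [IsProbabilityMeasure μ] {ρ : Measure R} {τ : R → unitInterval}
    (hτ : MeasurePreserving τ ρ volume) (hG : Measurable G) (hGs : IsPermInvariant G)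
    (hGm : ∀ y, μ.map (fun w => G (update y Finset.univ w)) = ν) :
    ∃ Q : (Finset ι → C) → D × R → C, Measurable (uncurry Q) ∧ IsPermInvariant Q ∧
      (∀ y, (ν.prod ρ).map (Q y) = μ) ∧
      ∀ y, ∀ᵐ p ∂ν.prod ρ, G (update y Finset.univ (Q y p)) = p.1 := by
  have : Nonempty C := nonempty_of_isProbabilityMeasure μ
  let Gtop (y : Finset ι → C) (w : C) : D := G (update y Finset.univ w)
  have hGy (y) : Measurable (Gtop y) := hG.comp (measurable_update y)
  -- The identity kernel: its disintegration depends measurably on the law being disintegrated.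
  let κ : Kernel (ProbabilityMeasure (D × C)) (D × C) := ⟨Subtype.val, measurable_subtype_coe⟩
  have : IsMarkovKernel κ := ⟨fun π => π.2⟩
  obtain ⟨φ, hφ, hφκ⟩ := exists_measurable_map_prodMk_eq κ hτ
  let law (y : Finset ι → C) : ProbabilityMeasure (D × C) :=
    ⟨topGraphLaw μ G y, isProbabilityMeasure_topGraphLaw hG y⟩
  have hlaw : Measurable law := (measurable_topGraphLaw hG).subtype_mk
  have hfst (y) : κ.fst (law y) = ν :=
    (Kernel.fst_apply κ (law y)).trans ((fst_topGraphLaw y).trans (hGm y))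
  have hgraph (y) : (ν.prod ρ).map (fun p => (p.1, φ (law y) p)) = topGraphLaw μ G y :=
    hfst y ▸ hφκ (law y)
  have hφy (y) : Measurable (φ (law y)) := hφ.of_uncurry_left
  refine ⟨fun y => φ (law y), hφ.comp (hlaw.prodMap measurable_id), fun σ y => ?_,
    fun y => map_eq_of_map_prodMk_eq_graph (f := Gtop y) (hGy y) (hφy y) (hgraph y),
    fun y => ae_eq_fst_of_map_prodMk_eq_graph (f := Gtop y) (hGy y) (hφy y) (hgraph y)⟩
  exact congrArg φ (Subtype.ext (isPermInvariant_topGraphLaw hGs σ y))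

end Resampling

theorem factorization_skew_product_general [MeasurableSpace C] [StandardBorelSpace C]
    [MeasurableSpace D] [MeasurableSpace.CountablyGenerated D] [MeasurableEq D]
    [MeasurableSpace R] {μ : Measure C} [IsProbabilityMeasure μ] {ν : Measure D} {ρ : Measure R}
    {τ : R → unitInterval} (hτ : MeasurePreserving τ ρ volume) (k : ℕ)
    (g : ∀ i : ℕ, (Finset (Fin i) → C) → D) (hg_meas : ∀ i, Measurable (g i))
    (hg_sym : MidSymC g) (hg_mp : IsMPTuple μ ν g) :
    ∃ h : ∀ i : ℕ, (Finset (Fin i) → D × R) → C,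
      (∀ i, Measurable (h i)) ∧ MidSymC h ∧ IsMPTuple (ν.prod ρ) μ h ∧
      ∀ᵐ x ∂Measure.pi (fun _ : Finset (Fin k) => ν.prod ρ),
        hatC g (hatC h x) = fun e => (x e).1 := by
  have : Nonempty C := nonempty_of_isProbabilityMeasure μ
  have : IsProbabilityMeasure ρ := isProbabilityMeasure_of_measurePreserving hτ
  have : IsProbabilityMeasure ν := by
    rw [← hg_mp 0 Classical.ofNonempty]
    exact Measure.isProbabilityMeasure_map
      ((hg_meas 0).comp (measurable_update _)).aemeasurable
  choose Q hQ_meas hQ_sym hQ_map hQ_inv using fun i =>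
    exists_measurable_resampling hτ (hg_meas i) (hg_sym i) (hg_mp i)
  exact ⟨recTuple Q, measurable_recTuple hQ_meas, midSymC_recTuple hQ_sym,
    isMPTuple_recTuple hQ_map,
    ae_hatC_hatC_recTuple_eq hg_meas measurable_fst hQ_meas hQ_sym hQ_inv k⟩

instance : IsProbabilityMeasure unif01 := by
  constructor
  simp [unif01]

lemma measurePreserving_projIcc_unif01 :
    MeasurePreserving (Set.projIcc (0 : ℝ) 1 zero_le_one) unif01 volume := by
  have hproj : Measurable (Set.projIcc (0 : ℝ) 1 zero_le_one) := continuous_projIcc.measurable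
  have hid : Set.projIcc (0 : ℝ) 1 zero_le_one ∘ Subtype.val = id :=
    funext (Set.projIcc_val zero_le_one)
  refine ⟨hproj, ?_⟩
  rw [unif01, Measure.restrict_congr_set Ico_ae_eq_Icc,
    ← unitInterval.measurePreserving_coe.map_eq, Measure.map_map hproj measurable_subtype_coe, hid,
    Measure.map_id]

/-- Factorization of measure-preserving skew-product maps: let `U = (U_e)_{e⊆[k]}` and
`V = (V_e)_{e⊆[k]}` be independent uniform variables in `[0,1)^{P[k]}`, modelled by the
coordinates of the product measure below.  If `G : [0,1)^{P[k]} → [0,1)^{P[k]}` is of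
skew-product type with Lebesgue-measure-preserving tuple, then there is
`H : ([0,1)×[0,1))^{P[k]} → [0,1)^{P[k]}` of skew-product type, with
Lebesgue-measure-preserving tuple, such that `G(H(U,V)) = U` almost surely. -/
theorem factorization_skew_product (k : ℕ)
    (g : ∀ i : ℕ, (Finset (Fin i) → ℝ) → ℝ)
    (hg_meas : ∀ i, Measurable (g i))
    (hg_sym : MidSymC g)
    (hg_mp : IsMPTuple unif01 unif01 g) :
    ∃ h : ∀ i : ℕ, (Finset (Fin i) → ℝ × ℝ) → ℝ,
      (∀ i, Measurable (h i)) ∧ MidSymC h ∧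
      IsMPTuple (unif01.prod unif01) unif01 h ∧
      ∀ᵐ x ∂(Measure.pi (fun _ : Finset (Fin k) => unif01.prod unif01)),
        hatC g (hatC h x) = fun e => (x e).1 :=
  factorization_skew_product_general measurePreserving_projIcc_unif01 k g hg_meas hg_sym hg_mp
end
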